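/- For every admissible locally Lipschitz curve Γ : [a,b] → ℝ³, the length of Γ in the metric d_F equals the degenerate length of its planar projection: L(Γ) = E(Π(Γ)). -/

import Mathlib

open MeasureTheory Set Filter Topology
open scoped ENNReal

noncomputable section

/-- The Euclidean norm of a vector in `ℝ × ℝ`. -/
def enorm2 (v : ℝ × ℝ) : ℝ := Real.sqrt (v.1 ^ 2 + v.2 ^ 2)

/-- The degenerate length `E(γ) = ∫ₐᵇ F(γ(t)) |γ'(t)| dt` of a planar curve. -/
def degLen (F : ℝ × ℝ → ℝ) (a b : ℝ) (γ : ℝ → ℝ × ℝ) : ℝ :=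
  ∫ t in a..b, F (γ t) * enorm2 (deriv γ t)

/-- The signed area `𝒜(γ) = ∫ₐᵇ γ¹(t) (γ²)'(t) dt` of a planar curve. -/
def sArea (a b : ℝ) (γ : ℝ → ℝ × ℝ) : ℝ :=
  ∫ t in a..b, (γ t).1 * deriv (fun s => (γ s).2) t

/-- A locally Lipschitz curve on `[a,b]` joining `p` to `q`. -/
def IsCurve (a b : ℝ) (γ : ℝ → ℝ × ℝ) (p q : ℝ × ℝ) : Prop :=
  a ≤ b ∧ LocallyLipschitz γ ∧ γ a = p ∧ γ b = q

/-- The standing hypotheses on the potential `W`: smooth, nonnegative, vanishing exactly at the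
two distinct wells `pm` and `pp`, with positive definite Hessians there, and bounded away from
zero near infinity (`liminf_{|p|→∞} W(p) > 0`). -/
structure TwoWell (W : ℝ × ℝ → ℝ) (pm pp : ℝ × ℝ) : Prop where
  smooth : ContDiff ℝ (⊤ : ℕ∞) W
  nonneg : ∀ p, 0 ≤ W p
  wells_ne : pm ≠ pp
  zeroSet : ∀ p, W p = 0 ↔ p = pm ∨ p = pp
  hess_m : ∀ v : ℝ × ℝ, v ≠ 0 → 0 < iteratedFDeriv ℝ 2 W pm ![v, v]
  hess_p : ∀ v : ℝ × ℝ, v ≠ 0 → 0 < iteratedFDeriv ℝ 2 W pp ![v, v]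
  coercive : ∃ c > 0, ∃ R : ℝ, ∀ p : ℝ × ℝ, R ≤ ‖p‖ → c ≤ W p

/-- The singular Carnot–Carathéodory distance on `ℝ³` induced by the conformal factor `F`:
the infimum of degenerate lengths of locally Lipschitz planar curves joining the planar
projections of `P` and `Q` whose signed area equals the difference of third coordinates. -/
def dCC (F : ℝ × ℝ → ℝ) (P Q : ℝ × ℝ × ℝ) : ℝ :=
  sInf { x | ∃ a b γ, IsCurve a b γ (P.1, P.2.1) (Q.1, Q.2.1) ∧
      sArea a b γ = Q.2.2 - P.2.2 ∧ degLen F a b γ = x }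

/-- The length of a curve in `ℝ³` with respect to the metric `dCC F`: the supremum over
finite partitions of the sums of distances of consecutive sample points. -/
def pathLen (F : ℝ × ℝ → ℝ) (a b : ℝ) (Γ : ℝ → ℝ × ℝ × ℝ) : ℝ :=
  sSup { x | ∃ (n : ℕ) (t : Fin (n + 1) → ℝ), Monotone t ∧ t 0 = a ∧ t (Fin.last n) = b ∧
      x = ∑ i : Fin n, dCC F (Γ (t i.castSucc)) (Γ (t i.succ)) }

/-- A curve `Γ = (Γ¹,Γ²,Γ³) : ℝ → ℝ³` is admissible on `[a,b]` if
`(Γ³)'(t) = Γ¹(t) (Γ²)'(t)` for a.e. `t ∈ (a,b)`. -/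
def Admissible (a b : ℝ) (Γ : ℝ → ℝ × ℝ × ℝ) : Prop :=
  ∀ᵐ t : ℝ ∂volume, t ∈ Set.Ioo a b →
    deriv (fun s => (Γ s).2.2) t = (Γ t).1 * deriv (fun s => (Γ s).2.1) t

/-- The planar projection `Π(Γ) = (Γ¹,Γ²)` of a curve in `ℝ³`. -/
def projCurve (Γ : ℝ → ℝ × ℝ × ℝ) : ℝ → ℝ × ℝ := fun t => ((Γ t).1, (Γ t).2.1)

/-- The identification of the plane with `ℂ`, carrying `enorm2` to the norm. -/
def eC : (ℝ × ℝ) ≃L[ℝ] ℂ := Complex.equivRealProdCLM.symm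

lemma enorm2_eq (v : ℝ × ℝ) : enorm2 v = ‖eC v‖ := by
  rw [enorm2, eC, Complex.equivRealProdCLM_symm_apply, Complex.norm_add_mul_I]

lemma enorm2_nonneg (v : ℝ × ℝ) : 0 ≤ enorm2 v := Real.sqrt_nonneg _

lemma locLip_ac {f : ℝ → ℝ} (hf : LocallyLipschitz f) (a b : ℝ) :
    AbsolutelyContinuousOnInterval f a b := by
  obtain ⟨K, hK⟩ := (hf.locallyLipschitzOn (s := uIcc a b)).exists_lipschitzOnWith_of_compact
    isCompact_uIcc
  exact hK.absolutelyContinuousOnInterval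

lemma ae_diff_plane {γ : ℝ → ℝ × ℝ} (hγ : LocallyLipschitz γ) (a b : ℝ) :
    ∀ᵐ t, t ∈ uIcc a b → DifferentiableAt ℝ γ t := by
  have h1 := (locLip_ac (LipschitzWith.prod_fst.locallyLipschitz.comp hγ) a b).ae_differentiableAt
  have h2 := (locLip_ac (LipschitzWith.prod_snd.locallyLipschitz.comp hγ) a b).ae_differentiableAt
  filter_upwards [h1, h2] with t h1 h2 ht
  exact (h1 ht).prodMk (h2 ht)

lemma intble {F : ℝ × ℝ → ℝ} (hF : Continuous F) {γ : ℝ → ℝ × ℝ} (hγ : LocallyLipschitz γ)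
    (a b : ℝ) : IntervalIntegrable (fun t => F (γ t) * enorm2 (deriv γ t)) volume a b := by
  have hd : IntervalIntegrable (fun t => enorm2 (deriv γ t)) volume a b := by
    obtain ⟨K, hK⟩ := (hγ.locallyLipschitzOn
      (s := Icc (min a b - 1) (max a b + 1))).exists_lipschitzOnWith_of_compact isCompact_Icc
    refine (intervalIntegrable_const (c := ‖(eC : (ℝ × ℝ) →L[ℝ] ℂ)‖ * (K : ℝ))).mono_fun ?_ ?_
    · have : (fun t => enorm2 (deriv γ t)) = fun t => ‖eC (deriv γ t)‖ := by
        funext t; exact enorm2_eq _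
      rw [this]
      exact ((eC.continuous.measurable.comp (measurable_deriv γ)).norm).aestronglyMeasurable
    · refine (ae_restrict_iff' measurableSet_uIoc).2 (Eventually.of_forall fun t ht => ?_)
      have ht' := uIoc_subset_uIcc ht
      rw [uIcc, mem_Icc] at ht'
      have hn : Icc (min a b - 1) (max a b + 1) ∈ 𝓝 t :=
        Icc_mem_nhds (by linarith [ht'.1]) (by linarith [ht'.2])
      have hb := norm_deriv_le_of_lipschitzOn hn hK
      have h0 : 0 ≤ ‖(eC : (ℝ × ℝ) →L[ℝ] ℂ)‖ * (K : ℝ) := by positivity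
      beta_reduce
      rw [Real.norm_of_nonneg (enorm2_nonneg _), Real.norm_of_nonneg h0, enorm2_eq]
      exact ((eC : (ℝ × ℝ) →L[ℝ] ℂ).le_opNorm _).trans
        (mul_le_mul_of_nonneg_left hb (norm_nonneg _))
  exact hd.continuousOn_mul (hF.comp hγ.continuous).continuousOn

lemma degLen_nonneg {F : ℝ × ℝ → ℝ} (h0 : ∀ x, 0 ≤ F x) {a b : ℝ} (hab : a ≤ b)
    (γ : ℝ → ℝ × ℝ) : 0 ≤ degLen F a b γ :=
  intervalIntegral.integral_nonneg hab fun _ _ => mul_nonneg (h0 _) (enorm2_nonneg _)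

lemma key_lower {F : ℝ × ℝ → ℝ} (hF : Continuous F) (h0 : ∀ x, 0 ≤ F x)
    {c d : ℝ} (hcd : c ≤ d) {σ : ℝ → ℝ × ℝ} (hσ : LocallyLipschitz σ)
    {m r : ℝ} (hm : 0 ≤ m) (hr : 0 ≤ r) (hmr : ∀ x, ‖eC x - eC (σ c)‖ ≤ r → m ≤ F x) :
    m * min ‖eC (σ d) - eC (σ c)‖ r ≤ degLen F c d σ := by
  set ψ : ℝ → ℝ := fun s => min ‖eC (σ s) - eC (σ c)‖ r with hψ
  have hlip : LocallyLipschitz ψ := by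
    refine LocallyLipschitz.min_const ?_ r
    have h1 : LocallyLipschitz (fun s => eC (σ s)) :=
      (ContinuousLinearMap.lipschitz (eC : (ℝ × ℝ) →L[ℝ] ℂ)).locallyLipschitz.comp hσ
    have h2 : LocallyLipschitz (fun z : ℂ => ‖z - eC (σ c)‖) := by
      refine LipschitzWith.locallyLipschitz (K := 1) (LipschitzWith.of_dist_le_mul fun x y => ?_)
      rw [NNReal.coe_one, one_mul, ← dist_eq_norm, ← dist_eq_norm]
      exact dist_dist_dist_le_left x y _
    exact h2.comp h1
  have hac := locLip_ac hlip c d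
  have hint := hac.integral_deriv_eq_sub
  have e1 : m * min ‖eC (σ d) - eC (σ c)‖ r = ∫ t in c..d, m * deriv ψ t := by
    rw [intervalIntegral.integral_const_mul, hint]
    simp [hψ, hr]
  rw [e1, degLen]
  refine intervalIntegral.integral_mono_ae_restrict hcd
    (hac.intervalIntegrable_deriv.const_mul m) (intble hF hσ c d) ?_
  refine (ae_restrict_iff' measurableSet_Icc).2 ?_
  filter_upwards [hac.ae_differentiableAt, ae_diff_plane hσ c d] with t h1 h2 ht
  rw [← uIcc_of_le hcd] at ht
  have h1 := (h1 ht).hasDerivAt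
  have h2 : HasDerivAt (fun s => eC (σ s)) (eC (deriv σ t)) t :=
    (eC : (ℝ × ℝ) →L[ℝ] ℂ).hasFDerivAt.comp_hasDerivAt t (h2 ht).hasDerivAt
  by_cases hle : ‖eC (σ t) - eC (σ c)‖ ≤ r
  · have hb : deriv ψ t ≤ enorm2 (deriv σ t) := by
      rw [enorm2_eq]
      refine (le_abs_self _).trans ?_
      rw [← Real.norm_eq_abs]
      refine le_of_tendsto_of_tendsto (hasDerivAt_iff_tendsto_slope.1 h1).norm
        (hasDerivAt_iff_tendsto_slope.1 h2).norm (Eventually.of_forall fun s => ?_)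
      simp only [slope, norm_smul, vsub_eq_sub]
      refine mul_le_mul_of_nonneg_left ?_ (norm_nonneg _)
      rw [Real.norm_eq_abs]
      refine (abs_min_sub_min_le_max _ _ _ _).trans ?_
      rw [sub_self, abs_zero, max_eq_left (abs_nonneg _)]
      refine (abs_norm_sub_norm_le _ _).trans ?_
      rw [sub_sub_sub_cancel_right]
    exact (mul_le_mul_of_nonneg_left hb hm).trans
      (mul_le_mul_of_nonneg_right (hmr _ hle) (enorm2_nonneg _))
  · have hev : ∀ᶠ s in 𝓝 t, ψ s = r := by
      have hc : Continuous fun s => ‖eC (σ s) - eC (σ c)‖ :=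
        ((eC.continuous.comp hσ.continuous).sub continuous_const).norm
      filter_upwards [hc.continuousAt.eventually (lt_mem_nhds (not_le.1 hle))] with s hs
      exact min_eq_right hs.le
    have : deriv ψ t = 0 := by
      rw [Filter.EventuallyEq.deriv_eq (f := fun _ => r) hev]; simp
    rw [this, mul_zero]
    exact mul_nonneg (h0 _) (enorm2_nonneg _)

section main
variable {F : ℝ × ℝ → ℝ} {a b : ℝ} {Γ : ℝ → ℝ × ℝ × ℝ}

lemma proj_lip (hlip : LocallyLipschitz Γ) : LocallyLipschitz (projCurve Γ) :=
  (LipschitzWith.prod_fst.locallyLipschitz.comp hlip).prodMk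
    (LipschitzWith.prod_fst.locallyLipschitz.comp
      (LipschitzWith.prod_snd.locallyLipschitz.comp hlip))

lemma mem_set (hlip : LocallyLipschitz Γ) (hadm : Admissible a b Γ) {s t : ℝ} (has : a ≤ s)
    (hst : s ≤ t) (htb : t ≤ b) :
    IsCurve s t (projCurve Γ) ((Γ s).1, (Γ s).2.1) ((Γ t).1, (Γ t).2.1) ∧
      sArea s t (projCurve Γ) = (Γ t).2.2 - (Γ s).2.2 := by
  refine ⟨⟨hst, proj_lip hlip, rfl, rfl⟩, ?_⟩
  have h3 : LocallyLipschitz fun u => (Γ u).2.2 :=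
    LipschitzWith.prod_snd.locallyLipschitz.comp (LipschitzWith.prod_snd.locallyLipschitz.comp hlip)
  rw [← (locLip_ac h3 s t).integral_deriv_eq_sub, sArea]
  refine intervalIntegral.integral_congr_ae ?_
  have hb : ∀ᵐ x : ℝ, x ≠ b := by simp [ae_iff, measure_singleton]
  filter_upwards [hadm, hb] with x hx hxb hxm
  rw [uIoc_of_le hst] at hxm
  exact (hx ⟨has.trans_lt hxm.1, lt_of_le_of_ne (hxm.2.trans htb) hxb⟩).symm

lemma dCC_nonneg (h0 : ∀ x, 0 ≤ F x) (P Q : ℝ × ℝ × ℝ) : 0 ≤ dCC F P Q := by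
  refine Real.sInf_nonneg ?_
  rintro x ⟨c, d, γ, hγ, -, rfl⟩
  exact degLen_nonneg h0 hγ.1 γ

lemma dCC_le (h0 : ∀ x, 0 ≤ F x) (hlip : LocallyLipschitz Γ) (hadm : Admissible a b Γ)
    {s t : ℝ} (has : a ≤ s) (hst : s ≤ t) (htb : t ≤ b) :
    dCC F (Γ s) (Γ t) ≤ degLen F s t (projCurve Γ) := by
  refine csInf_le ⟨0, ?_⟩ ?_
  · rintro x ⟨c, d, γ, hγ, -, rfl⟩
    exact degLen_nonneg h0 hγ.1 γ
  · obtain ⟨h1, h2⟩ := mem_set hlip hadm has hst htb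
    exact ⟨s, t, _, h1, h2, rfl⟩

lemma le_dCC (hF : Continuous F) (h0 : ∀ x, 0 ≤ F x) (hlip : LocallyLipschitz Γ)
    (hadm : Admissible a b Γ)
    {s t : ℝ} (has : a ≤ s) (hst : s ≤ t) (htb : t ≤ b)
    {m r : ℝ} (hm : 0 ≤ m) (hr : 0 ≤ r)
    (hmr : ∀ x, ‖eC x - eC (projCurve Γ s)‖ ≤ r → m ≤ F x) :
    m * min ‖eC (projCurve Γ t) - eC (projCurve Γ s)‖ r ≤ dCC F (Γ s) (Γ t) := by
  refine le_csInf ?_ ?_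
  · obtain ⟨h1, h2⟩ := mem_set hlip hadm has hst htb
    exact ⟨_, s, t, _, h1, h2, rfl⟩
  · rintro x ⟨c, d, γ, ⟨hcd, hγ, hc, hd⟩, -, rfl⟩
    have e1 : projCurve Γ s = γ c := hc.symm
    have e2 : projCurve Γ t = γ d := hd.symm
    rw [e1] at hmr
    rw [e1, e2]
    exact key_lower hF h0 hcd hγ hm hr hmr

lemma sum_le (hF : Continuous F) (h0 : ∀ x, 0 ≤ F x) (hlip : LocallyLipschitz Γ)
    (hadm : Admissible a b Γ) :
    ∀ (n : ℕ) (t : Fin (n + 1) → ℝ), Monotone t → t 0 = a → t (Fin.last n) ≤ b →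
      ∑ i : Fin n, dCC F (Γ (t i.castSucc)) (Γ (t i.succ)) ≤
        degLen F a (t (Fin.last n)) (projCurve Γ) := by
  intro n
  induction n with
  | zero =>
    intro t ht h1 h2
    have : t (Fin.last 0) = a := h1
    rw [this]
    simp [degLen]
  | succ n ih =>
    intro t ht h1 h2
    have hle : t (Fin.last n).castSucc ≤ t (Fin.last (n + 1)) := ht (Fin.le_last _)
    have ih' := ih (fun i => t i.castSucc) (fun i j hij => ht (Fin.castSucc_le_castSucc_iff.2 hij))
      h1 (hle.trans h2)
    have ha : a ≤ t (Fin.last n).castSucc := h1 ▸ ht (Fin.zero_le _)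
    rw [Fin.sum_univ_castSucc]
    have hd := dCC_le h0 hlip hadm ha hle h2
    have hadd : degLen F a (t (Fin.last n).castSucc) (projCurve Γ) +
        degLen F (t (Fin.last n).castSucc) (t (Fin.last (n + 1))) (projCurve Γ) =
        degLen F a (t (Fin.last (n + 1))) (projCurve Γ) :=
      intervalIntegral.integral_add_adjacent_intervals (intble hF (proj_lip hlip) _ _)
        (intble hF (proj_lip hlip) _ _)
    rw [← hadd]
    exact add_le_add ih' hd

lemma pl_bdd (hF : Continuous F) (h0 : ∀ x, 0 ≤ F x) (hlip : LocallyLipschitz Γ)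
    (hadm : Admissible a b Γ) {s : ℝ} (hsb : s ≤ b) :
    degLen F a s (projCurve Γ) ∈ upperBounds { x | ∃ (n : ℕ) (t : Fin (n + 1) → ℝ), Monotone t ∧
      t 0 = a ∧ t (Fin.last n) = s ∧
      x = ∑ i : Fin n, dCC F (Γ (t i.castSucc)) (Γ (t i.succ)) } := by
  rintro x ⟨n, t, ht, h1, h2, rfl⟩
  have := sum_le hF h0 hlip hadm n t ht h1 (h2 ▸ hsb)
  rwa [h2] at this

lemma pl_nonempty {s : ℝ} (has : a ≤ s) :
    { x | ∃ (n : ℕ) (t : Fin (n + 1) → ℝ), Monotone t ∧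
      t 0 = a ∧ t (Fin.last n) = s ∧
      x = ∑ i : Fin n, dCC F (Γ (t i.castSucc)) (Γ (t i.succ)) }.Nonempty := by
  refine ⟨_, 1, ![a, s], ?_, rfl, rfl, rfl⟩
  intro i j hij
  fin_cases i <;> fin_cases j <;> simp_all

lemma pl_super (hF : Continuous F) (h0 : ∀ x, 0 ≤ F x) (hlip : LocallyLipschitz Γ)
    (hadm : Admissible a b Γ) {s u : ℝ} (has : a ≤ s) (hsu : s ≤ u) (hub : u ≤ b) :
    pathLen F a s Γ + dCC F (Γ s) (Γ u) ≤ pathLen F a u Γ := by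
  rw [← le_sub_iff_add_le]
  refine csSup_le (pl_nonempty has) ?_
  rintro x ⟨n, t, ht, h1, h2, rfl⟩
  rw [le_sub_iff_add_le]
  refine le_csSup ⟨_, pl_bdd hF h0 hlip hadm hub⟩
    ⟨n + 1, Fin.snoc (α := fun _ => ℝ) t u, ?_, ?_, ?_, ?_⟩
  · intro i j hij
    induction j using Fin.lastCases with
    | last =>
      induction i using Fin.lastCases with
      | last => exact le_rfl
      | cast i =>
        simp only [Fin.snoc_castSucc, Fin.snoc_last]
        exact (ht (Fin.le_last i)).trans (h2 ▸ hsu)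
    | cast j =>
      induction i using Fin.lastCases with
      | last => exact absurd hij (not_le.2 (Fin.castSucc_lt_last j))
      | cast i =>
        simp only [Fin.snoc_castSucc]
        exact ht (Fin.castSucc_le_castSucc_iff.1 hij)
  · have : (0 : Fin (n + 1 + 1)) = Fin.castSucc 0 := rfl
    rw [this, Fin.snoc_castSucc, h1]
  · simp
  · rw [Fin.sum_univ_castSucc]
    congr 1
    · refine Finset.sum_congr rfl fun i _ => ?_
      rw [Fin.snoc_castSucc, ← Fin.castSucc_succ, Fin.snoc_castSucc]
    · rw [Fin.snoc_castSucc, h2, Fin.succ_last, Fin.snoc_last]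

lemma lower (hF : Continuous F) (h0 : ∀ x, 0 ≤ F x) (hab : a ≤ b) (hlip : LocallyLipschitz Γ)
    (hadm : Admissible a b Γ) : degLen F a b (projCurve Γ) ≤ pathLen F a b Γ := by
  set V : ℝ → ℝ := fun t => pathLen F a t Γ with hV
  have hmono : MonotoneOn V (uIcc a b) := by
    rw [uIcc_of_le hab]
    intro s hs u hu hsu
    have := pl_super hF h0 hlip hadm hs.1 hsu hu.2
    have := dCC_nonneg h0 (Γ s) (Γ u)
    simp only [hV]; linarith
  have hVa : 0 ≤ V a := by
    refine Real.sSup_nonneg ?_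
    rintro x ⟨n, t, -, -, -, rfl⟩
    exact Finset.sum_nonneg fun i _ => dCC_nonneg h0 _ _
  have hVab : V a ≤ V b := hmono left_mem_uIcc right_mem_uIcc hab
  have hi := hmono.intervalIntegral_deriv_mem_uIcc
  rw [uIcc_of_le (sub_nonneg.2 hVab)] at hi
  have hle : degLen F a b (projCurve Γ) ≤ ∫ x in a..b, deriv V x := by
    refine intervalIntegral.integral_mono_ae_restrict hab (intble hF (proj_lip hlip) a b)
      hmono.intervalIntegrable_deriv ?_
    refine (ae_restrict_iff' measurableSet_Icc).2 ?_
    have hnb : ∀ᵐ x : ℝ, x ≠ b := by simp [ae_iff, measure_singleton]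
    have hna : ∀ᵐ x : ℝ, x ≠ a := by simp [ae_iff, measure_singleton]
    filter_upwards [hmono.ae_differentiableWithinAt_of_mem, ae_diff_plane (proj_lip hlip) a b,
      hna, hnb] with t h1 h2 hta htb ht
    have htl : a < t := lt_of_le_of_ne ht.1 (Ne.symm hta)
    have htr : t < b := lt_of_le_of_ne ht.2 htb
    have hVd : HasDerivAt V (deriv V t) t := by
      rw [uIcc_of_le hab] at h1
      exact ((h1 ht).differentiableAt (Icc_mem_nhds htl htr)).hasDerivAt
    rw [uIcc_of_le hab] at h2
    set γ := projCurve Γ with hγ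
    have hγd : HasDerivAt (fun s => eC (γ s)) (eC (deriv γ t)) t :=
      (eC : (ℝ × ℝ) →L[ℝ] ℂ).hasFDerivAt.comp_hasDerivAt t (h2 ht).hasDerivAt
    have key : ∀ ε : ℝ, 0 < ε → (F (γ t) - ε) * enorm2 (deriv γ t) ≤ deriv V t := by
      intro ε hε
      have hn : {z : ℂ | F (γ t) - ε < F (eC.symm z)} ∈ 𝓝 (eC (γ t)) := by
        refine (hF.comp eC.symm.continuous).continuousAt.eventually (lt_mem_nhds ?_)
        simp [hε]
      obtain ⟨r, hr, hrs⟩ := Metric.nhds_basis_closedBall.mem_iff.1 hn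
      have hmr : ∀ x, ‖eC x - eC (γ t)‖ ≤ r → max (F (γ t) - ε) 0 ≤ F x := by
        intro x hx
        have := hrs (mem_closedBall_iff_norm.2 hx)
        simp only [mem_ofPred_eq, ContinuousLinearEquiv.symm_apply_apply] at this
        exact max_le this.le (h0 x)
      refine (mul_le_mul_of_nonneg_right (le_max_left _ 0) (enorm2_nonneg _)).trans ?_
      rw [enorm2_eq]
      have hsub : 𝓝[>] t ≤ 𝓝[≠] t := nhdsWithin_mono _ fun x hx => ne_of_gt hx
      have T1 := ((hasDerivAt_iff_tendsto_slope.1 hγd).mono_left hsub).norm.const_mul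
        (max (F (γ t) - ε) 0)
      have T2 := (hasDerivAt_iff_tendsto_slope.1 hVd).mono_left hsub
      refine le_of_tendsto_of_tendsto T1 T2 ?_
      have hball : ∀ᶠ s in 𝓝[>] t, eC (γ s) ∈ Metric.closedBall (eC (γ t)) r :=
        mem_nhdsWithin_of_mem_nhds
          (hγd.continuousAt.eventually (Metric.closedBall_mem_nhds _ hr))
      have hlt : ∀ᶠ s in 𝓝[>] t, s < b := mem_nhdsWithin_of_mem_nhds (gt_mem_nhds htr)
      filter_upwards [hball, hlt, self_mem_nhdsWithin] with s hs hsb hts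
      have hts : t < s := hts
      have hd := le_dCC hF h0 hlip hadm htl.le hts.le hsb.le (le_max_right (F (γ t) - ε) 0)
        hr.le hmr
      rw [min_eq_left (mem_closedBall_iff_norm.1 hs)] at hd
      have hp := pl_super hF h0 hlip hadm htl.le hts.le hsb.le
      have hpos : 0 < s - t := sub_pos.2 hts
      simp only [slope, norm_smul, vsub_eq_sub, smul_eq_mul]
      rw [Real.norm_of_nonneg (inv_nonneg.2 hpos.le), mul_left_comm]
      refine mul_le_mul_of_nonneg_left ?_ (inv_nonneg.2 hpos.le)
      simp only [hV]
      linarith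
    have T : Tendsto (fun ε : ℝ => (F (γ t) - ε) * enorm2 (deriv γ t)) (𝓝[>] 0)
        (𝓝 (F (γ t) * enorm2 (deriv γ t))) := by
      have : Continuous (fun ε : ℝ => (F (γ t) - ε) * enorm2 (deriv γ t)) := by fun_prop
      have h := this.tendsto 0
      rw [sub_zero] at h
      exact h.mono_left nhdsWithin_le_nhds
    exact le_of_tendsto T (by filter_upwards [self_mem_nhdsWithin] with ε hε using key ε hε)
  have := hi.2
  simp only [hV] at *
  linarith

end main

/-- for every admissible locally Lipschitz curve `Γ : [a,b] → ℝ³`, its length in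
the metric `d_F` equals the degenerate length of its planar projection: `L(Γ) = E(Π(Γ))`. -/
theorem pathLen_eq_degLen_proj
    (W : ℝ × ℝ → ℝ) (pm pp : ℝ × ℝ) (hW : TwoWell W pm pp)
    (F : ℝ × ℝ → ℝ) (hF : F = fun p => Real.sqrt (W p))
    (a b : ℝ) (hab : a ≤ b) (Γ : ℝ → ℝ × ℝ × ℝ)
    (hlip : LocallyLipschitz Γ) (hadm : Admissible a b Γ) :
    pathLen F a b Γ = degLen F a b (projCurve Γ) := by
  have hFc : Continuous F := by
    rw [hF]; exact hW.smooth.continuous.sqrt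
  have h0 : ∀ x, 0 ≤ F x := by
    intro x; rw [hF]; exact Real.sqrt_nonneg _
  refine le_antisymm ?_ (lower hFc h0 hab hlip hadm)
  exact csSup_le (pl_nonempty hab) (pl_bdd hFc h0 hlip hadm le_rfl)
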